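/- If a = b is a formula of Λ× (a and b terms of the same type) that is not provable in Λ×, then in Λ× extended with a = b as a new axiom schema, every formula c = d (with c and d terms of the same type) is provable. -/

import Mathlib

set_option autoImplicit false

/-- Types of the typed lambda calculus Λ× : generated from atomic types (`ν`) and the
constant atomic type `T` by `→` and `×`. -/
inductive Tyx (ν : Type) : Type
  | atom : ν → Tyx ν
  | unit : Tyx ν
  | arrow : Tyx ν → Tyx ν → Tyx ν
  | prod : Tyx ν → Tyx ν → Tyx ν

/-- A typing context. -/
abbrev Ctxx (ν : Type) : Type := List (Tyx ν)

/-- Typed de Bruijn variables. -/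
inductive Varx {ν : Type} : Ctxx ν → Tyx ν → Type
  | vz {Γ : Ctxx ν} {A : Tyx ν} : Varx (A :: Γ) A
  | vs {Γ : Ctxx ν} {A B : Tyx ν} : Varx Γ A → Varx (B :: Γ) A

/-- Typed terms of Λ×. -/
inductive Tmx {ν : Type} : Ctxx ν → Tyx ν → Type
  | var {Γ : Ctxx ν} {A : Tyx ν} : Varx Γ A → Tmx Γ A
  | app {Γ : Ctxx ν} {A B : Tyx ν} : Tmx Γ (Tyx.arrow A B) → Tmx Γ A → Tmx Γ B
  | lam {Γ : Ctxx ν} {A B : Tyx ν} : Tmx (A :: Γ) B → Tmx Γ (Tyx.arrow A B)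
  | pair {Γ : Ctxx ν} {A B : Tyx ν} : Tmx Γ A → Tmx Γ B → Tmx Γ (Tyx.prod A B)
  | p1 {Γ : Ctxx ν} {A B : Tyx ν} : Tmx Γ (Tyx.prod A B) → Tmx Γ A
  | p2 {Γ : Ctxx ν} {A B : Tyx ν} : Tmx Γ (Tyx.prod A B) → Tmx Γ B
  | k {Γ : Ctxx ν} : Tmx Γ Tyx.unit

/-- Renamings between contexts. -/
def Renx {ν : Type} (Γ Δ : Ctxx ν) : Type := ∀ A : Tyx ν, Varx Γ A → Varx Δ A

def Renx.ext {ν : Type} {Γ Δ : Ctxx ν} (ρ : Renx Γ Δ) (A : Tyx ν) :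
    ∀ B : Tyx ν, Varx (A :: Γ) B → Varx (A :: Δ) B
  | _, .vz => .vz
  | _, .vs w => .vs (ρ _ w)

def Tmx.rename {ν : Type} : ∀ {Γ Δ : Ctxx ν} {A : Tyx ν}, Renx Γ Δ → Tmx Γ A → Tmx Δ A
  | _, _, _, ρ, .var v => .var (ρ _ v)
  | _, _, _, ρ, .app f a => .app (f.rename ρ) (a.rename ρ)
  | _, _, _, ρ, .lam b => .lam (b.rename (Renx.ext ρ _))
  | _, _, _, ρ, .pair a b => .pair (a.rename ρ) (b.rename ρ)
  | _, _, _, ρ, .p1 a => .p1 (a.rename ρ)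
  | _, _, _, ρ, .p2 a => .p2 (a.rename ρ)
  | _, _, _, _, .k => .k

/-- Simultaneous substitutions. -/
def Substx {ν : Type} (Γ Δ : Ctxx ν) : Type := ∀ A : Tyx ν, Varx Γ A → Tmx Δ A

def Substx.ext {ν : Type} {Γ Δ : Ctxx ν} (σ : Substx Γ Δ) (A : Tyx ν) :
    ∀ B : Tyx ν, Varx (A :: Γ) B → Tmx (A :: Δ) B
  | _, .vz => .var .vz
  | _, .vs w => (σ _ w).rename (fun _ => Varx.vs)

def Tmx.subst {ν : Type} : ∀ {Γ Δ : Ctxx ν} {A : Tyx ν}, Substx Γ Δ → Tmx Γ A → Tmx Δ A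
  | _, _, _, σ, .var v => σ _ v
  | _, _, _, σ, .app f a => .app (f.subst σ) (a.subst σ)
  | _, _, _, σ, .lam b => .lam (b.subst (Substx.ext σ _))
  | _, _, _, σ, .pair a b => .pair (a.subst σ) (b.subst σ)
  | _, _, _, σ, .p1 a => .p1 (a.subst σ)
  | _, _, _, σ, .p2 a => .p2 (a.subst σ)
  | _, _, _, _, .k => .k

def Substx.cons {ν : Type} {Γ Δ : Ctxx ν} {A : Tyx ν} (b : Tmx Δ A) (σ : Substx Γ Δ) :
    ∀ B : Tyx ν, Varx (A :: Γ) B → Tmx Δ B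
  | _, .vz => b
  | _, .vs w => σ _ w

/-- Substitution of a single term for the last variable: `a[b/x]`. -/
def Tmx.subst1 {ν : Type} {Γ : Ctxx ν} {A B : Tyx ν} (a : Tmx (A :: Γ) B) (b : Tmx Γ A) :
    Tmx Γ B :=
  a.subst (Substx.cons b (fun _ v => .var v))

/-- The theory Λ× of βη-equality with surjective pairing and terminal type `T`. -/
inductive Eqvx {ν : Type} : ∀ {Γ : Ctxx ν} {A : Tyx ν}, Tmx Γ A → Tmx Γ A → Prop
  | refl {Γ : Ctxx ν} {A : Tyx ν} (a : Tmx Γ A) : Eqvx a a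
  | symm {Γ : Ctxx ν} {A : Tyx ν} {a b : Tmx Γ A} : Eqvx a b → Eqvx b a
  | trans {Γ : Ctxx ν} {A : Tyx ν} {a b c : Tmx Γ A} : Eqvx a b → Eqvx b c → Eqvx a c
  | congApp {Γ : Ctxx ν} {A B : Tyx ν} {f g : Tmx Γ (Tyx.arrow A B)} {a b : Tmx Γ A} :
      Eqvx f g → Eqvx a b → Eqvx (.app f a) (.app g b)
  | congLam {Γ : Ctxx ν} {A B : Tyx ν} {a b : Tmx (A :: Γ) B} :
      Eqvx a b → Eqvx (.lam a) (.lam b)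
  | congPair {Γ : Ctxx ν} {A B : Tyx ν} {a a' : Tmx Γ A} {b b' : Tmx Γ B} :
      Eqvx a a' → Eqvx b b' → Eqvx (.pair a b) (.pair a' b')
  | congP1 {Γ : Ctxx ν} {A B : Tyx ν} {a b : Tmx Γ (Tyx.prod A B)} :
      Eqvx a b → Eqvx (.p1 a) (.p1 b)
  | congP2 {Γ : Ctxx ν} {A B : Tyx ν} {a b : Tmx Γ (Tyx.prod A B)} :
      Eqvx a b → Eqvx (.p2 a) (.p2 b)
  | beta {Γ : Ctxx ν} {A B : Tyx ν} (a : Tmx (A :: Γ) B) (b : Tmx Γ A) :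
      Eqvx (.app (.lam a) b) (a.subst1 b)
  | eta {Γ : Ctxx ν} {A B : Tyx ν} (a : Tmx Γ (Tyx.arrow A B)) :
      Eqvx (.lam (.app (a.rename (fun _ => Varx.vs)) (.var .vz))) a
  | prodBeta1 {Γ : Ctxx ν} {A B : Tyx ν} (a : Tmx Γ A) (b : Tmx Γ B) :
      Eqvx (.p1 (.pair a b)) a
  | prodBeta2 {Γ : Ctxx ν} {A B : Tyx ν} (a : Tmx Γ A) (b : Tmx Γ B) :
      Eqvx (.p2 (.pair a b)) b
  | prodEta {Γ : Ctxx ν} {A B : Tyx ν} (c : Tmx Γ (Tyx.prod A B)) :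
      Eqvx (.pair (.p1 c) (.p2 c)) c
  | unit {Γ : Ctxx ν} (a : Tmx Γ Tyx.unit) : Eqvx a .k

def Varx.elim0 {ν : Type} {A : Tyx ν} {C : Sort*} : Varx ([] : Ctxx ν) A → C :=
  fun v => nomatch v

/-- Weakening of a closed term into an arbitrary context. -/
def Tmx.wk {ν : Type} {Δ : Ctxx ν} {A : Tyx ν} (t : Tmx ([] : Ctxx ν) A) : Tmx Δ A :=
  t.rename (fun _ v => v.elim0)

/-- One-step reduction of types of Λ× (replacement of a redex subtype by its
contractum). -/
inductive TyStep {ν : Type} : Tyx ν → Tyx ν → Prop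
  | arrProd (A B₁ B₂ : Tyx ν) :
      TyStep (.arrow A (.prod B₁ B₂)) (.prod (.arrow A B₁) (.arrow A B₂))
  | prodArr (A₁ A₂ B : Tyx ν) :
      TyStep (.arrow (.prod A₁ A₂) B) (.arrow A₁ (.arrow A₂ B))
  | prodAssoc (A B C : Tyx ν) :
      TyStep (.prod A (.prod B C)) (.prod (.prod A B) C)
  | arrUnit (A : Tyx ν) : TyStep (.arrow A .unit) .unit
  | unitArr (B : Tyx ν) : TyStep (.arrow .unit B) B
  | prodUnit (A : Tyx ν) : TyStep (.prod A .unit) A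
  | unitProd (A : Tyx ν) : TyStep (.prod .unit A) A
  | arrL {A A' : Tyx ν} (B : Tyx ν) : TyStep A A' → TyStep (.arrow A B) (.arrow A' B)
  | arrR (A : Tyx ν) {B B' : Tyx ν} : TyStep B B' → TyStep (.arrow A B) (.arrow A B')
  | prodL {A A' : Tyx ν} (B : Tyx ν) : TyStep A A' → TyStep (.prod A B) (.prod A' B)
  | prodR (A : Tyx ν) {B B' : Tyx ν} : TyStep B B' → TyStep (.prod A B) (.prod A B')

/-- A type is in product normal form iff none of its subtypes is a redex, i.e. iff no
type reduction applies to it. -/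
def PNF {ν : Type} (A : Tyx ν) : Prop := ∀ B : Tyx ν, ¬ TyStep A B

/-- Substitution of types for the atomic types, on types of Λ×. -/
def Tyx.substA {ν : Type} (σ : ν → Tyx ν) : Tyx ν → Tyx ν
  | .atom v => σ v
  | .unit => .unit
  | .arrow A B => .arrow (A.substA σ) (B.substA σ)
  | .prod A B => .prod (A.substA σ) (B.substA σ)

def Varx.substA {ν : Type} (σ : ν → Tyx ν) :
    ∀ {Γ : Ctxx ν} {A : Tyx ν}, Varx Γ A → Varx (Γ.map (Tyx.substA σ)) (A.substA σ)
  | _, _, .vz => .vz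
  | _, _, .vs v => .vs (v.substA σ)

/-- Substitution of types for the atomic types, on terms of Λ× : type-instances. -/
def Tmx.substA {ν : Type} (σ : ν → Tyx ν) :
    ∀ {Γ : Ctxx ν} {A : Tyx ν}, Tmx Γ A → Tmx (Γ.map (Tyx.substA σ)) (A.substA σ)
  | _, _, .var v => .var (v.substA σ)
  | _, _, .app f a => .app (f.substA σ) (a.substA σ)
  | _, _, .lam b => .lam (b.substA σ)
  | _, _, .pair a b => .pair (a.substA σ) (b.substA σ)
  | _, _, .p1 a => .p1 (a.substA σ)
  | _, _, .p2 a => .p2 (a.substA σ)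
  | _, _, .k => .k

/-- `Tyx.arrs [A₁, …, Aₘ] B = Aₘ → (… → (A₁ → B))` : the type of `λx₁…xₘ.a`. -/
def Tyx.arrs {ν : Type} : Ctxx ν → Tyx ν → Tyx ν
  | [], B => B
  | A :: Γ, B => Tyx.arrs Γ (Tyx.arrow A B)

/-- λ-abstracting all the free variables of a term of Λ×. -/
def Tmx.lamAll {ν : Type} : ∀ {Γ : Ctxx ν} {A : Tyx ν}, Tmx Γ A → Tmx [] (Tyx.arrs Γ A)
  | [], _, a => a
  | _ :: Γ, _, a => Tmx.lamAll (Γ := Γ) (Tmx.lam a)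

/-- `Tyx.arrsR [B₁, …, Bₙ] C = B₁ → (… → (Bₙ → C))`. -/
def Tyx.arrsR {ν : Type} : List (Tyx ν) → Tyx ν → Tyx ν
  | [], C => C
  | B :: Bs, C => Tyx.arrow B (Tyx.arrsR Bs C)

/-- A list of terms `h₁ : B₁, …, hₙ : Bₙ` in context `Δ`. -/
inductive HListx {ν : Type} (Δ : Ctxx ν) : List (Tyx ν) → Type
  | nil : HListx Δ []
  | cons {B : Tyx ν} {Bs : List (Tyx ν)} : Tmx Δ B → HListx Δ Bs → HListx Δ (B :: Bs)

def HListx.apps {ν : Type} {Δ : Ctxx ν} :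
    ∀ {Bs : List (Tyx ν)} {C : Tyx ν}, HListx Δ Bs → Tmx Δ (Tyx.arrsR Bs C) → Tmx Δ C
  | _, _, .nil, t => t
  | _, _, .cons h hs, t => HListx.apps hs (t.app h)

/-- Iterated application `t h₁ … hₙ`. -/
def Tmx.apps {ν : Type} {Δ : Ctxx ν} {Bs : List (Tyx ν)} {C : Tyx ν}
    (t : Tmx Δ (Tyx.arrsR Bs C)) (hs : HListx Δ Bs) : Tmx Δ C :=
  hs.apps t

/-- `PiStep n i t u` : regarding the type of `t` as an iterated product
`×_{j=1}^n A_j` (left-nested, `n ≥ 1`), `u` is the `i`-th projection `π^i t`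
(for `1 ≤ i ≤ n`): `π^i t = t` if `n = 1`, and for `n > 1`, `πⁿ t = p² t` and
`π^i t = π^i (p¹ t)` for `i < n`. -/
inductive PiStep {ν : Type} {Γ : Ctxx ν} : ℕ → ℕ → ∀ {A B : Tyx ν}, Tmx Γ A → Tmx Γ B → Prop
  | one {A : Tyx ν} (t : Tmx Γ A) : PiStep 1 1 t t
  | last {n : ℕ} {A B : Tyx ν} (t : Tmx Γ (Tyx.prod A B)) : PiStep (n + 1) (n + 1) t (.p2 t)
  | lower {n i : ℕ} {A B C : Tyx ν} (t : Tmx Γ (Tyx.prod A B)) {u : Tmx Γ C} :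
      PiStep n i (.p1 t) u → PiStep (n + 1) i t u

/--
The theory Λ× extended with `a₀ = b₀` as a new axiom schema: atomic types are treated
as variables, so every pair of corresponding type-instances of `a₀` and `b₀` is an
axiom (and, the free variables of an axiom being ordinary variables, so is every
substitution instance of such a pair, which is anyhow derivable by (β) and
replacement).
-/
inductive EqvxExt {ν : Type} {Γ₀ : Ctxx ν} {A₀ : Tyx ν} (a₀ b₀ : Tmx Γ₀ A₀) :
    ∀ {Γ : Ctxx ν} {A : Tyx ν}, Tmx Γ A → Tmx Γ A → Prop
  | refl {Γ : Ctxx ν} {A : Tyx ν} (a : Tmx Γ A) : EqvxExt a₀ b₀ a a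
  | symm {Γ : Ctxx ν} {A : Tyx ν} {a b : Tmx Γ A} : EqvxExt a₀ b₀ a b → EqvxExt a₀ b₀ b a
  | trans {Γ : Ctxx ν} {A : Tyx ν} {a b c : Tmx Γ A} :
      EqvxExt a₀ b₀ a b → EqvxExt a₀ b₀ b c → EqvxExt a₀ b₀ a c
  | congApp {Γ : Ctxx ν} {A B : Tyx ν} {f g : Tmx Γ (Tyx.arrow A B)} {a b : Tmx Γ A} :
      EqvxExt a₀ b₀ f g → EqvxExt a₀ b₀ a b → EqvxExt a₀ b₀ (.app f a) (.app g b)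
  | congLam {Γ : Ctxx ν} {A B : Tyx ν} {a b : Tmx (A :: Γ) B} :
      EqvxExt a₀ b₀ a b → EqvxExt a₀ b₀ (.lam a) (.lam b)
  | congPair {Γ : Ctxx ν} {A B : Tyx ν} {a a' : Tmx Γ A} {b b' : Tmx Γ B} :
      EqvxExt a₀ b₀ a a' → EqvxExt a₀ b₀ b b' → EqvxExt a₀ b₀ (.pair a b) (.pair a' b')
  | congP1 {Γ : Ctxx ν} {A B : Tyx ν} {a b : Tmx Γ (Tyx.prod A B)} :
      EqvxExt a₀ b₀ a b → EqvxExt a₀ b₀ (.p1 a) (.p1 b)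
  | congP2 {Γ : Ctxx ν} {A B : Tyx ν} {a b : Tmx Γ (Tyx.prod A B)} :
      EqvxExt a₀ b₀ a b → EqvxExt a₀ b₀ (.p2 a) (.p2 b)
  | beta {Γ : Ctxx ν} {A B : Tyx ν} (a : Tmx (A :: Γ) B) (b : Tmx Γ A) :
      EqvxExt a₀ b₀ (.app (.lam a) b) (a.subst1 b)
  | eta {Γ : Ctxx ν} {A B : Tyx ν} (a : Tmx Γ (Tyx.arrow A B)) :
      EqvxExt a₀ b₀ (.lam (.app (a.rename (fun _ => Varx.vs)) (.var .vz))) a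
  | prodBeta1 {Γ : Ctxx ν} {A B : Tyx ν} (a : Tmx Γ A) (b : Tmx Γ B) :
      EqvxExt a₀ b₀ (.p1 (.pair a b)) a
  | prodBeta2 {Γ : Ctxx ν} {A B : Tyx ν} (a : Tmx Γ A) (b : Tmx Γ B) :
      EqvxExt a₀ b₀ (.p2 (.pair a b)) b
  | prodEta {Γ : Ctxx ν} {A B : Tyx ν} (c : Tmx Γ (Tyx.prod A B)) :
      EqvxExt a₀ b₀ (.pair (.p1 c) (.p2 c)) c
  | unit {Γ : Ctxx ν} (a : Tmx Γ Tyx.unit) : EqvxExt a₀ b₀ a .k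
  | ax (σ : ν → Tyx ν) {Δ : Ctxx ν} (su : Substx (Γ₀.map (Tyx.substA σ)) Δ) :
      EqvxExt a₀ b₀ ((a₀.substA σ).subst su) ((b₀.substA σ).subst su)

/-!
An unprovable equation `a = b` already fails in a full type hierarchy over a finite set. Indeed, in
the hierarchy whose base set consists of the sets of subterms of a long normal form of `a`, this
normal form can be read back from its value (normalisation by evaluation), so that every `b` with
the same value is provably equal to `a`.

Now replace every atomic type by `Cⁿ → C`, whose `n` projections encode the elements of a base set
of size `n`. By induction on the type, every element of the hierarchy is represented by a term, and
definition by cases on represented elements is possible in Λ× with values in `C`. A case distinction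
on the value of `a` thus gives a term `h` that takes an instance of `a` to `c` and the corresponding
instance of `b` to `d`, provably in Λ×.
-/

/-! ### Renaming and substitution -/

-- `Renx.ext ρ A`, `Substx.ext σ A` and `Substx.cons b σ` have the unfolded types; `simp` has to
-- accept them as renamings and substitutions.
attribute [reducible] Renx Substx

/-- Weakening by one fresh variable. -/
local postfix:max "⇡" => Tmx.rename fun _ => Varx.vs

section RenamingSubstitution

variable {ν : Type} {Γ Δ Θ : Ctxx ν} {A B : Tyx ν}

namespace Tmx

theorem rename_id (t : Tmx Γ A) : t.rename (fun _ v => v) = t := by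
  induction t with
  | @lam Γ A B b ih =>
    have ext_id : Renx.ext (fun _ v => v : Renx Γ Γ) A = fun _ v => v := by
      funext _ v
      cases v <;> rfl
    simp only [rename, ext_id, ih]
  | _ => simp_all only [rename]

theorem rename_rename (t : Tmx Γ A) (ρ : Renx Γ Δ) (ρ' : Renx Δ Θ) :
    (t.rename ρ).rename ρ' = t.rename (fun B v => ρ' B (ρ B v)) := by
  induction t generalizing Δ Θ with
  | lam b ih =>
    simp only [rename, ih]
    congr 2
    funext _ v
    cases v <;> rfl
  | _ => simp_all only [rename]

theorem subst_rename (t : Tmx Γ A) (ρ : Renx Γ Δ) (σ : Substx Δ Θ) :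
    (t.rename ρ).subst σ = t.subst (fun B v => σ B (ρ B v)) := by
  induction t generalizing Δ Θ with
  | lam b ih =>
    simp only [rename, subst, ih]
    congr 2
    funext _ v
    cases v <;> rfl
  | _ => simp_all only [rename, subst]

theorem rename_weaken (t : Tmx Γ A) (ρ : Renx Γ Δ) (B : Tyx ν) :
    (t⇡).rename (Renx.ext ρ B) = (t.rename ρ)⇡ := by
  simp only [rename_rename, Renx.ext]

theorem rename_subst (t : Tmx Γ A) (σ : Substx Γ Δ) (ρ : Renx Δ Θ) :
    (t.subst σ).rename ρ = t.subst (fun B v => (σ B v).rename ρ) := by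
  induction t generalizing Δ Θ with
  | lam b ih =>
    simp only [rename, subst, ih]
    congr 2
    funext _ v
    cases v with
    | vz => rfl
    | vs w => exact rename_weaken _ ρ _
  | _ => simp_all only [rename, subst]

theorem subst_subst (t : Tmx Γ A) (σ : Substx Γ Δ) (τ : Substx Δ Θ) :
    (t.subst σ).subst τ = t.subst (fun B v => (σ B v).subst τ) := by
  induction t generalizing Δ Θ with
  | lam b ih =>
    simp only [subst, ih]
    congr 2
    funext _ v
    cases v with
    | vz => rfl
    | vs w => simp only [Substx.ext, subst_rename, rename_subst]
  | _ => simp_all only [subst]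

theorem subst_var (t : Tmx Γ A) : t.subst (fun _ v => .var v) = t := by
  induction t with
  | @lam Γ A B b ih =>
    have ext_var : Substx.ext (fun _ v => .var v : Substx Γ Γ) A = fun _ v => .var v := by
      funext _ v
      cases v <;> rfl
    simp only [subst, ext_var, ih]
  | _ => simp_all only [subst]

theorem weaken_subst_cons (t : Tmx Γ A) (s : Tmx Δ B) (σ : Substx Γ Δ) :
    (t⇡).subst (Substx.cons s σ) = t.subst σ := by
  simp only [subst_rename, Substx.cons]

theorem weaken_subst1 (t : Tmx Γ A) (s : Tmx Γ B) : (t⇡).subst1 s = t := by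
  rw [subst1, weaken_subst_cons, subst_var]

theorem rename_subst1 (b : Tmx (A :: Γ) B) (s : Tmx Γ A) (ρ : Renx Γ Δ) :
    (b.subst1 s).rename ρ = (b.rename (Renx.ext ρ A)).subst1 (s.rename ρ) := by
  simp only [subst1, rename_subst, subst_rename]
  congr 1
  funext _ v
  cases v <;> rfl

theorem subst_ext_subst1 (b : Tmx (A :: Γ) B) (σ : Substx Γ Δ) (s : Tmx Δ A) :
    (b.subst (Substx.ext σ A)).subst1 s = b.subst (Substx.cons s σ) := by
  rw [subst1, subst_subst]
  congr 1
  funext _ v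
  cases v with
  | vz => rfl
  | vs w => exact weaken_subst1 _ s

end Tmx

namespace Eqvx

theorem rename {a b : Tmx Γ A} (h : Eqvx a b) (ρ : Renx Γ Δ) :
    Eqvx (a.rename ρ) (b.rename ρ) := by
  induction h generalizing Δ with
  | refl => exact .refl _
  | symm _ ih => exact (ih ρ).symm
  | trans _ _ ih₁ ih₂ => exact (ih₁ ρ).trans (ih₂ ρ)
  | congApp _ _ ih₁ ih₂ => exact .congApp (ih₁ ρ) (ih₂ ρ)
  | congLam _ ih => exact .congLam (ih _)
  | congPair _ _ ih₁ ih₂ => exact .congPair (ih₁ ρ) (ih₂ ρ)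
  | congP1 _ ih => exact .congP1 (ih ρ)
  | congP2 _ ih => exact .congP2 (ih ρ)
  | beta =>
    rw [Tmx.rename_subst1]
    exact .beta _ _
  | eta =>
    simp only [Tmx.rename, Tmx.rename_weaken]
    exact .eta _
  | prodBeta1 => exact .prodBeta1 _ _
  | prodBeta2 => exact .prodBeta2 _ _
  | prodEta => exact .prodEta _
  | unit => exact .unit _

theorem beta_of_eq {b : Tmx (A :: Γ) B} {s : Tmx Γ A} {c : Tmx Γ B} (h : b.subst1 s = c) :
    Eqvx (.app (.lam b) s) c :=
  h ▸ .beta b s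

theorem app_subst_lam (b : Tmx (A :: Γ) B) (σ : Substx Γ Δ) (s : Tmx Δ A) :
    Eqvx (.app ((Tmx.lam b).subst σ) s) (b.subst (Substx.cons s σ)) :=
  beta_of_eq (Tmx.subst_ext_subst1 b σ s)

theorem toExt {Γ₀ : Ctxx ν} {A₀ : Tyx ν} (a₀ b₀ : Tmx Γ₀ A₀) {a b : Tmx Γ A} (h : Eqvx a b) :
    EqvxExt a₀ b₀ a b := by
  induction h with
  | refl => exact .refl _
  | symm _ ih => exact ih.symm
  | trans _ _ ih₁ ih₂ => exact ih₁.trans ih₂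
  | congApp _ _ ih₁ ih₂ => exact .congApp ih₁ ih₂
  | congLam _ ih => exact .congLam ih
  | congPair _ _ ih₁ ih₂ => exact .congPair ih₁ ih₂
  | congP1 _ ih => exact .congP1 ih
  | congP2 _ ih => exact .congP2 ih
  | beta => exact .beta _ _
  | eta => exact .eta _
  | prodBeta1 => exact .prodBeta1 _ _
  | prodBeta2 => exact .prodBeta2 _ _
  | prodEta => exact .prodEta _
  | unit => exact .unit _

end Eqvx

end RenamingSubstitution

/-! ### Full type hierarchies -/

section Semantics

variable {ν : Type} {S : Type} {Γ Δ : Ctxx ν} {A : Tyx ν}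

/-- The domain of the type `A` in the full type hierarchy over `S`, in which every atomic type is
interpreted as `S`. -/
@[reducible] def Tyx.Sem (S : Type) : Tyx ν → Type
  | .atom _ => S
  | .unit => Unit
  | .arrow A B => A.Sem S → B.Sem S
  | .prod A B => A.Sem S × B.Sem S

instance Tyx.finite_sem [Finite S] : ∀ A : Tyx ν, Finite (A.Sem S)
  | .atom _ => ‹Finite S›
  | .unit => inferInstanceAs (Finite Unit)
  | .arrow A B =>
    have := finite_sem A
    have := finite_sem B
    inferInstanceAs (Finite (A.Sem S → B.Sem S))
  | .prod A B =>
    have := finite_sem A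
    have := finite_sem B
    inferInstanceAs (Finite (A.Sem S × B.Sem S))

instance Tyx.nonempty_sem [Nonempty S] : ∀ A : Tyx ν, Nonempty (A.Sem S)
  | .atom _ => ‹Nonempty S›
  | .unit => inferInstanceAs (Nonempty Unit)
  | .arrow A B =>
    have := nonempty_sem B
    inferInstanceAs (Nonempty (A.Sem S → B.Sem S))
  | .prod A B =>
    have := nonempty_sem A
    have := nonempty_sem B
    inferInstanceAs (Nonempty (A.Sem S × B.Sem S))

/-- Valuations of the variables of `Γ` in the full type hierarchy over `S`. -/
abbrev Env (S : Type) (Γ : Ctxx ν) : Type := ∀ A : Tyx ν, Varx Γ A → A.Sem S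

/-- The valuation of `A :: Γ` extending `ρ` by the value `x` for the last variable. -/
def Env.cons (x : A.Sem S) (ρ : Env S Γ) : Env S (A :: Γ)
  | _, .vz => x
  | _, .vs v => ρ _ v

/-- The value of a term in the full type hierarchy over `S`. -/
def Tmx.eval : ∀ {Γ : Ctxx ν} {A : Tyx ν}, Tmx Γ A → Env S Γ → A.Sem S
  | _, _, .var v, ρ => ρ _ v
  | _, _, .app f a, ρ => (f.eval ρ) (a.eval ρ)
  | _, _, .lam b, ρ => fun x => b.eval (Env.cons x ρ)
  | _, _, .pair a b, ρ => (a.eval ρ, b.eval ρ)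
  | _, _, .p1 a, ρ => (a.eval ρ).1
  | _, _, .p2 a, ρ => (a.eval ρ).2
  | _, _, .k, _ => ()

theorem Tmx.eval_rename (t : Tmx Γ A) (r : Renx Γ Δ) (ρ : Env S Δ) :
    (t.rename r).eval ρ = t.eval (fun B v => ρ B (r B v)) := by
  induction t generalizing Δ with
  | lam b ih =>
    simp only [rename, eval, ih]
    funext x
    congr 1
    funext _ v
    cases v <;> rfl
  | _ => simp_all only [rename, eval]

theorem Tmx.eval_subst (t : Tmx Γ A) (σ : Substx Γ Δ) (ρ : Env S Δ) :
    (t.subst σ).eval ρ = t.eval (fun B v => (σ B v).eval ρ) := by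
  induction t generalizing Δ with
  | lam b ih =>
    simp only [subst, eval, ih]
    funext x
    congr 1
    funext _ v
    cases v with
    | vz => rfl
    | vs w => exact eval_rename _ _ _
  | _ => simp_all only [subst, eval]

theorem Eqvx.eval_eq {a b : Tmx Γ A} (h : Eqvx a b) (ρ : Env S Γ) : a.eval ρ = b.eval ρ := by
  induction h with
  | symm _ ih => exact (ih ρ).symm
  | trans _ _ ih₁ ih₂ => exact (ih₁ ρ).trans (ih₂ ρ)
  | beta a b =>
    simp only [Tmx.eval, Tmx.subst1, Tmx.eval_subst]
    congr 1
    funext _ v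
    cases v <;> rfl
  | eta a =>
    simp only [Tmx.eval, Tmx.eval_rename]
    rfl
  | refl | prodBeta1 | prodBeta2 | prodEta | unit => rfl
  | _ => simp_all only [Tmx.eval]

end Semantics

/-! ### The finite model property -/

section FiniteModel

variable {ν : Type} {Γ Δ Θ : Ctxx ν} {A B : Tyx ν}

/-- `Weakening Γ Δ` witnesses that `Γ` is a final segment of `Δ`, that is, that `Δ` declares further
variables on top of those of `Γ`. -/
inductive Weakening : Ctxx ν → Ctxx ν → Type
  | refl {Γ : Ctxx ν} : Weakening Γ Γ
  | step {Γ Δ : Ctxx ν} (A : Tyx ν) : Weakening Γ Δ → Weakening Γ (A :: Δ)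

namespace Weakening

/-- The renaming that shifts the variables of `Γ` past the additional variables of `Δ`. -/
def ren : ∀ {Γ Δ : Ctxx ν}, Weakening Γ Δ → Renx Γ Δ
  | _, _, .refl => fun _ v => v
  | _, _, .step _ e => fun _ v => .vs (e.ren _ v)

/-- Composition of weakenings. -/
def trans (e : Weakening Γ Δ) : ∀ {Θ : Ctxx ν}, Weakening Δ Θ → Weakening Γ Θ
  | _, .refl => e
  | _, .step A f => .step A (e.trans f)

theorem ren_trans (e : Weakening Γ Δ) (f : Weakening Δ Θ) :
    (e.trans f).ren = fun A v => f.ren A (e.ren A v) := by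
  induction f with
  | refl => simp only [trans, ren]
  | step A f ih => simp only [trans, ren, ih]

theorem length_le (e : Weakening Γ Δ) : Γ.length ≤ Δ.length := by
  induction e with
  | refl => exact le_rfl
  | step _ _ ih => exact ih.trans (Nat.le_succ _)

instance : Subsingleton (Weakening Γ Δ) where
  allEq e f := by
    induction e with
    | refl =>
      cases f with
      | refl => rfl
      | step A f => exact absurd f.length_le (Nat.not_succ_le_self _)
    | step A e ih =>
      cases f with
      | refl => exact absurd e.length_le (Nat.not_succ_le_self _)
      | step A f => rw [ih f]

end Weakening

namespace Tmx

theorem rename_ren_refl (t : Tmx Γ A) : t.rename (Weakening.refl : Weakening Γ Γ).ren = t := by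
  simp only [Weakening.ren, rename_id]

theorem rename_ren_step (t : Tmx Γ A) (e : Weakening Γ Δ) (B : Tyx ν) :
    t.rename (e.step B).ren = (t.rename e.ren)⇡ := by
  simp only [rename_rename, Weakening.ren]

theorem rename_ren_trans (t : Tmx Γ A) (e : Weakening Γ Δ) (f : Weakening Δ Θ) :
    t.rename (e.trans f).ren = (t.rename e.ren).rename f.ren := by
  rw [rename_rename, Weakening.ren_trans]

end Tmx

mutual

/-- Neutral terms: variables under eliminations whose arguments are long normal forms. -/
inductive Tmx.Neutral : ∀ {Γ : Ctxx ν} {A : Tyx ν}, Tmx Γ A → Prop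
  | var {Γ : Ctxx ν} {A : Tyx ν} (v : Varx Γ A) : Neutral (.var v)
  | app {Γ : Ctxx ν} {A B : Tyx ν} {f : Tmx Γ (.arrow A B)} {a : Tmx Γ A} :
      Neutral f → Normal a → Neutral (.app f a)
  | p1 {Γ : Ctxx ν} {A B : Tyx ν} {a : Tmx Γ (.prod A B)} : Neutral a → Neutral (.p1 a)
  | p2 {Γ : Ctxx ν} {A B : Tyx ν} {a : Tmx Γ (.prod A B)} : Neutral a → Neutral (.p2 a)

/-- Long normal forms: β-normal and η-expanded, so that neutral terms occur only at atomic types. -/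
inductive Tmx.Normal : ∀ {Γ : Ctxx ν} {A : Tyx ν}, Tmx Γ A → Prop
  | neutral {Γ : Ctxx ν} {p : ν} {a : Tmx Γ (.atom p)} : Neutral a → Normal a
  | lam {Γ : Ctxx ν} {A B : Tyx ν} {b : Tmx (A :: Γ) B} : Normal b → Normal (.lam b)
  | pair {Γ : Ctxx ν} {A B : Tyx ν} {a : Tmx Γ A} {b : Tmx Γ B} :
      Normal a → Normal b → Normal (.pair a b)
  | k {Γ : Ctxx ν} : Normal (.k : Tmx Γ .unit)

end

mutual

theorem Tmx.Neutral.rename : ∀ {Γ Δ : Ctxx ν} {A : Tyx ν} {t : Tmx Γ A},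
    t.Neutral → ∀ ρ : Renx Γ Δ, (t.rename ρ).Neutral
  | _, _, _, _, .var _, _ => .var _
  | _, _, _, _, .app hf ha, ρ => .app (hf.rename ρ) (ha.rename ρ)
  | _, _, _, _, .p1 ha, ρ => .p1 (ha.rename ρ)
  | _, _, _, _, .p2 ha, ρ => .p2 (ha.rename ρ)

theorem Tmx.Normal.rename : ∀ {Γ Δ : Ctxx ν} {A : Tyx ν} {t : Tmx Γ A},
    t.Normal → ∀ ρ : Renx Γ Δ, (t.rename ρ).Normal
  | _, _, _, _, .neutral ha, ρ => .neutral (ha.rename ρ)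
  | _, _, _, _, .lam hb, _ => .lam (hb.rename _)
  | _, _, _, _, .pair ha hb, ρ => .pair (ha.rename ρ) (hb.rename ρ)
  | _, _, _, _, .k, _ => .k

end

/-- Terms of all types in all contexts. -/
abbrev SomeTerm (ν : Type) : Type := Σ Γ : Ctxx ν, Σ A : Tyx ν, Tmx Γ A

/-- The subterms of a term, each taken in the context in which it occurs. -/
def Tmx.subterms : ∀ {Γ : Ctxx ν} {A : Tyx ν}, Tmx Γ A → Set (SomeTerm ν)
  | _, _, .var v => {⟨_, _, .var v⟩}
  | _, _, .app f a => insert ⟨_, _, .app f a⟩ (f.subterms ∪ a.subterms)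
  | _, _, .lam b => insert ⟨_, _, .lam b⟩ b.subterms
  | _, _, .pair a b => insert ⟨_, _, .pair a b⟩ (a.subterms ∪ b.subterms)
  | _, _, .p1 a => insert ⟨_, _, .p1 a⟩ a.subterms
  | _, _, .p2 a => insert ⟨_, _, .p2 a⟩ a.subterms
  | Γ, _, .k => {⟨Γ, _, .k⟩}

theorem Tmx.finite_subterms (t : Tmx Γ A) : t.subterms.Finite := by
  induction t <;> simp_all [subterms]

theorem Tmx.self_mem_subterms (t : Tmx Γ A) : ⟨Γ, A, t⟩ ∈ t.subterms := by
  cases t <;> simp [subterms]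

/-- Families of sets of terms of type `A`, indexed by the context. -/
abbrev TermFamily (A : Tyx ν) : Type := ∀ Γ : Ctxx ν, Set (Tmx Γ A)

/-- The family of all weakenings of a variable. -/
def Varx.family (v : Varx Γ A) : TermFamily A :=
  fun Δ => {t | ∃ e : Weakening Γ Δ, t = .var (e.ren _ v)}

mutual

/-- The family of long normal forms denoted by an element of the full type hierarchy over the sets
of terms in `L`: an element of the base set denotes its members, and a function denotes the
abstractions of the terms denoted by its value at a fresh variable. -/
def reify (L : Set (SomeTerm ν)) : ∀ A : Tyx ν, A.Sem (Set L) → TermFamily A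
  | .atom _, x, _ => {t | ∃ h : ⟨_, _, t⟩ ∈ L, ⟨_, h⟩ ∈ x}
  | .unit, _, _ => {.k}
  | .arrow A B, f, Γ => .lam '' reify L B (f (reflect L A (Varx.vz (Γ := Γ)).family)) (A :: Γ)
  | .prod A B, x, Γ => Set.image2 .pair (reify L A x.1 Γ) (reify L B x.2 Γ)

/-- The element of the full type hierarchy over the sets of terms in `L` named by a family of
neutral terms. At atomic types, terms outside `L` are forgotten; this is what keeps the base set
finite. -/
def reflect (L : Set (SomeTerm ν)) : ∀ A : Tyx ν, TermFamily A → A.Sem (Set L)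
  | .atom _, X => {s | ∃ Γ, ∃ t ∈ X Γ, s.1 = ⟨Γ, _, t⟩}
  | .unit, _ => ()
  | .arrow A B, X => fun x => reflect L B fun Γ => Set.image2 .app (X Γ) (reify L A x Γ)
  | .prod A B, X => (reflect L A fun Γ => .p1 '' X Γ, reflect L B fun Γ => .p2 '' X Γ)

end

/-- Every term in the family is provably equal to the corresponding weakening of `t`. -/
def Tmx.EqvxAll (t : Tmx Γ A) (X : TermFamily A) : Prop :=
  ∀ ⦃Δ : Ctxx ν⦄ (e : Weakening Γ Δ), ∀ n ∈ X Δ, Eqvx (t.rename e.ren) n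

/-- `t` is provably equal to a neutral term. -/
def Tmx.HasNeutral (t : Tmx Γ A) : Prop := ∃ n : Tmx Γ A, n.Neutral ∧ Eqvx t n

/-- `t` is provably equal to a long normal form. -/
def Tmx.HasNormal (t : Tmx Γ A) : Prop := ∃ n : Tmx Γ A, n.Normal ∧ Eqvx t n

/-- The Kripke logical relation between terms and elements of the full type hierarchy over the sets
of terms in `L`. -/
def Tracks (L : Set (SomeTerm ν)) : ∀ (A : Tyx ν) {Γ : Ctxx ν}, Tmx Γ A → A.Sem (Set L) → Prop
  | .atom p, _, t, x => t.HasNeutral ∧ t.EqvxAll (reify L (.atom p) x)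
  | .unit, _, _, _ => True
  | .arrow A B, Γ, t, f => ∀ ⦃Δ : Ctxx ν⦄ (e : Weakening Γ Δ) (s : Tmx Δ A) (x : A.Sem (Set L)),
      Tracks L A s x → Tracks L B (.app (t.rename e.ren) s) (f x)
  | .prod A B, _, t, x => Tracks L A (.p1 t) x.1 ∧ Tracks L B (.p2 t) x.2

theorem Tmx.HasNeutral.rename {t : Tmx Γ A} (h : t.HasNeutral) (ρ : Renx Γ Δ) :
    (t.rename ρ).HasNeutral :=
  let ⟨_, hn, htn⟩ := h
  ⟨_, hn.rename ρ, htn.rename ρ⟩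

theorem Varx.hasNeutral_var (v : Varx Γ A) : (Tmx.var v).HasNeutral :=
  ⟨_, .var v, .refl _⟩

theorem Varx.eqvxAll_family (v : Varx Γ A) : (Tmx.var v).EqvxAll v.family := by
  rintro Δ e _ ⟨e', rfl⟩
  rw [Subsingleton.elim e' e]
  exact .refl _

namespace Tracks

variable {L : Set (SomeTerm ν)}

theorem congr : ∀ {A : Tyx ν} {Γ : Ctxx ν} {t u : Tmx Γ A} {x : A.Sem (Set L)},
    Eqvx t u → Tracks L A t x → Tracks L A u x
  | .atom _, _, _, _, _, htu, ⟨⟨n, hn, htn⟩, hx⟩ =>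
    ⟨⟨n, hn, htu.symm.trans htn⟩, fun _ e m hm => (htu.rename _).symm.trans (hx e m hm)⟩
  | .unit, _, _, _, _, _, _ => trivial
  | .arrow _ _, _, _, _, _, htu, ht => fun _ e s x hs =>
    congr (.congApp (htu.rename _) (.refl _)) (ht e s x hs)
  | .prod _ _, _, _, _, _, htu, ht => ⟨congr (.congP1 htu) ht.1, congr (.congP2 htu) ht.2⟩

theorem weaken : ∀ {A : Tyx ν} {Γ Δ : Ctxx ν} {t : Tmx Γ A} {x : A.Sem (Set L)},
    Tracks L A t x → ∀ e : Weakening Γ Δ, Tracks L A (t.rename e.ren) x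
  | .atom _, _, _, _, _, ht, e => ⟨ht.1.rename _, fun _ f n hn => by
      rw [← Tmx.rename_ren_trans]
      exact ht.2 (e.trans f) n hn⟩
  | .unit, _, _, _, _, _, _ => trivial
  | .arrow _ _, _, _, _, _, ht, e => fun _ f s x hs => by
      rw [← Tmx.rename_ren_trans]
      exact ht (e.trans f) s x hs
  | .prod _ _, _, _, _, _, ht, e => ⟨ht.1.weaken e, ht.2.weaken e⟩

end Tracks

section ReifyReflect

variable (L : Set (SomeTerm ν))

/-- Reification is correct at `A`: a term that tracks `x` has a long normal form, and equals every
term denoted by `x`. -/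
def ReifySound (A : Tyx ν) : Prop :=
  ∀ ⦃Γ : Ctxx ν⦄ ⦃t : Tmx Γ A⦄ ⦃x : A.Sem (Set L)⦄,
    Tracks L A t x → t.HasNormal ∧ t.EqvxAll (reify L A x)

/-- Reflection is correct at `A`: a term with a neutral form that equals every term of a family
tracks the reflection of the family. -/
def ReflectSound (A : Tyx ν) : Prop :=
  ∀ ⦃Γ : Ctxx ν⦄ ⦃t : Tmx Γ A⦄ ⦃X : TermFamily A⦄,
    t.HasNeutral → t.EqvxAll X → Tracks L A t (reflect L A X)

variable {L}

theorem ReflectSound.tracks_var (hA : ReflectSound L A) (v : Varx Γ A) :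
    Tracks L A (.var v) (reflect L A v.family) :=
  hA v.hasNeutral_var v.eqvxAll_family

theorem reifySound_atom (p : ν) : ReifySound L (.atom p) :=
  fun _ _ _ ⟨⟨n, hn, htn⟩, hx⟩ => ⟨⟨n, .neutral hn, htn⟩, hx⟩

theorem reflectSound_atom (p : ν) : ReflectSound L (.atom p) := by
  refine fun Γ t X ht hX => ⟨ht, ?_⟩
  rintro Δ e n ⟨_, Δ', n', hn', heq⟩
  cases heq
  exact hX e n hn'

theorem reifySound_unit : ReifySound L (.unit : Tyx ν) :=
  fun _ _ _ _ => ⟨⟨.k, .k, .unit _⟩, fun _ _ _ hn => hn ▸ .unit _⟩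

theorem reifySound_arrow (hA : ReflectSound L A) (hB : ReifySound L B) :
    ReifySound L (.arrow A B) := by
  intro Γ t f ht
  have at_fresh {Δ : Ctxx ν} (e : Weakening Γ Δ) :=
    hB (ht (e.step A) _ _ (hA.tracks_var (Varx.vz (Γ := Δ))))
  constructor
  · obtain ⟨n, hn, htn⟩ := (at_fresh .refl).1
    rw [Tmx.rename_ren_step, Tmx.rename_ren_refl] at htn
    exact ⟨.lam n, .lam hn, (Eqvx.eta t).symm.trans (.congLam htn)⟩
  · rintro Δ e _ ⟨n, hn, rfl⟩
    have htn := (at_fresh e).2 .refl n hn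
    rw [Tmx.rename_ren_refl, Tmx.rename_ren_step] at htn
    exact (Eqvx.eta _).symm.trans (.congLam htn)

theorem reflectSound_arrow (hA : ReifySound L A) (hB : ReflectSound L B) :
    ReflectSound L (.arrow A B) := by
  rintro Γ t X ⟨m, hm, htm⟩ hX Δ e s x hs
  obtain ⟨⟨n, hn, hsn⟩, hx⟩ := hA hs
  refine hB ⟨_, .app (hm.rename e.ren) hn, .congApp (htm.rename _) hsn⟩ ?_
  rintro Θ e' _ ⟨m', hm', n', hn', rfl⟩
  rw [Tmx.rename, ← Tmx.rename_ren_trans]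
  exact .congApp (hX _ _ hm') (hx e' _ hn')

theorem reifySound_prod (hA : ReifySound L A) (hB : ReifySound L B) :
    ReifySound L (.prod A B) := by
  rintro Γ t x ⟨ht₁, ht₂⟩
  obtain ⟨⟨m, hm, htm⟩, hx₁⟩ := hA ht₁
  obtain ⟨⟨n, hn, htn⟩, hx₂⟩ := hB ht₂
  refine ⟨⟨_, .pair hm hn, (Eqvx.prodEta t).symm.trans (.congPair htm htn)⟩, ?_⟩
  rintro Δ e _ ⟨m', hm', n', hn', rfl⟩
  exact (Eqvx.prodEta _).symm.trans (.congPair (hx₁ e _ hm') (hx₂ e _ hn'))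

theorem reflectSound_prod (hA : ReflectSound L A) (hB : ReflectSound L B) :
    ReflectSound L (.prod A B) := by
  rintro Γ t X ⟨m, hm, htm⟩ hX
  refine ⟨hA ⟨_, .p1 hm, .congP1 htm⟩ ?_, hB ⟨_, .p2 hm, .congP2 htm⟩ ?_⟩
  · rintro Δ e _ ⟨m', hm', rfl⟩
    exact .congP1 (hX e _ hm')
  · rintro Δ e _ ⟨m', hm', rfl⟩
    exact .congP2 (hX e _ hm')

variable (L)

theorem reifySound_and_reflectSound (A : Tyx ν) : ReifySound L A ∧ ReflectSound L A := by
  induction A with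
  | atom p => exact ⟨reifySound_atom p, reflectSound_atom p⟩
  | unit => exact ⟨reifySound_unit, fun _ _ _ _ _ => trivial⟩
  | arrow A B ihA ihB => exact ⟨reifySound_arrow ihA.2 ihB.1, reflectSound_arrow ihA.1 ihB.2⟩
  | prod A B ihA ihB => exact ⟨reifySound_prod ihA.1 ihB.1, reflectSound_prod ihA.2 ihB.2⟩

theorem tracks_eval (t : Tmx Γ A) (σ : Substx Γ Δ) (ρ : Env (Set L) Γ)
    (hσ : ∀ (B : Tyx ν) (v : Varx Γ B), Tracks L B (σ B v) (ρ B v)) :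
    Tracks L A (t.subst σ) (t.eval ρ) := by
  induction t generalizing Δ with
  | var v => exact hσ _ v
  | app f a ihf iha =>
    have hfa := ihf σ ρ hσ .refl _ _ (iha σ ρ hσ)
    rwa [Tmx.rename_ren_refl] at hfa
  | lam b ih =>
    intro Θ e s x hs
    rw [Tmx.rename_subst]
    refine .congr (Eqvx.app_subst_lam _ _ _).symm (ih _ (Env.cons x ρ) fun B v => ?_)
    cases v with
    | vz => exact hs
    | vs w => exact (hσ B w).weaken e
  | pair a b iha ihb =>
    exact ⟨.congr (Eqvx.prodBeta1 _ _).symm (iha σ ρ hσ),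
      .congr (Eqvx.prodBeta2 _ _).symm (ihb σ ρ hσ)⟩
  | p1 a ih => exact (ih σ ρ hσ).1
  | p2 a ih => exact (ih σ ρ hσ).2
  | k => trivial

/-- The valuation at which a long normal form can be read back from its value. -/
def canonicalEnv (Γ : Ctxx ν) : Env (Set L) Γ := fun A v => reflect L A v.family

theorem tracks_eval_canonicalEnv (t : Tmx Γ A) : Tracks L A t (t.eval (canonicalEnv L Γ)) := by
  have h := tracks_eval L t (fun _ v => .var v) (canonicalEnv L Γ)
    fun B v => (reifySound_and_reflectSound L B).2.tracks_var v
  rwa [Tmx.subst_var] at h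

theorem Tmx.hasNormal (t : Tmx Γ A) : t.HasNormal :=
  ((reifySound_and_reflectSound ∅ A).1 (tracks_eval_canonicalEnv ∅ t)).1

theorem Tmx.eqvx_of_mem_reify {t n : Tmx Γ A}
    (hn : n ∈ reify L A (t.eval (canonicalEnv L Γ)) Γ) : Eqvx t n := by
  have htn := ((reifySound_and_reflectSound L A).1 (tracks_eval_canonicalEnv L t)).2 .refl n hn
  rwa [rename_ren_refl] at htn

end ReifyReflect

section ReadBack

variable {L : Set (SomeTerm ν)}

/-- Every variable is interpreted by reflecting a family that contains all its weakenings. Unlike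
`ρ = canonicalEnv L Γ`, this is preserved when the context is extended, since the families of the
old variables may also contain terms in contexts that do not extend the new one. -/
def Env.IsReflected (ρ : Env (Set L) Γ) : Prop :=
  ∀ (A : Tyx ν) (v : Varx Γ A), ∃ X : TermFamily A, ρ A v = reflect L A X ∧
    ∀ (Δ : Ctxx ν) (e : Weakening Γ Δ), .var (e.ren _ v) ∈ X Δ

theorem isReflected_canonicalEnv (L : Set (SomeTerm ν)) (Γ : Ctxx ν) :
    (canonicalEnv L Γ).IsReflected :=
  fun _ v => ⟨v.family, rfl, fun _ e => ⟨e, rfl⟩⟩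

theorem Env.IsReflected.cons {ρ : Env (Set L) Γ} (hρ : ρ.IsReflected) (A : Tyx ν) :
    (Env.cons (reflect L A (Varx.vz (Γ := Γ)).family) ρ).IsReflected := by
  intro B v
  cases v with
  | vz => exact ⟨_, rfl, fun _ e => ⟨e, rfl⟩⟩
  | vs w =>
    obtain ⟨X, hX, hw⟩ := hρ B w
    refine ⟨X, hX, fun Δ e => ?_⟩
    have hew := hw Δ ((Weakening.refl.step A).trans e)
    simp only [Weakening.ren_trans, Weakening.ren] at hew
    exact hew

mutual

theorem Tmx.Neutral.exists_mem_eval_eq_reflect : ∀ {Γ : Ctxx ν} {A : Tyx ν} {t : Tmx Γ A},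
    t.Neutral → t.subterms ⊆ L → ∀ {ρ : Env (Set L) Γ}, ρ.IsReflected →
      ∃ X : TermFamily A, t ∈ X Γ ∧ t.eval ρ = reflect L A X
  | _, _, _, .var v, _, _, hρ =>
    let ⟨X, hX, hv⟩ := hρ _ v
    ⟨X, by simpa only [Weakening.ren] using hv _ .refl, hX⟩
  | _, _, _, .app hf ha, hL, ρ, hρ => by
    obtain ⟨-, hfL, haL⟩ : _ ∧ _ ∧ _ := by simpa [subterms, Set.insert_subset_iff] using hL
    obtain ⟨X, hfX, hX⟩ := hf.exists_mem_eval_eq_reflect hfL hρ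
    refine ⟨fun Δ => Set.image2 .app (X Δ) _,
      Set.mem_image2_of_mem hfX (ha.mem_reify_eval haL hρ), ?_⟩
    rw [eval, hX]
    rfl
  | _, _, _, .p1 ha, hL, ρ, hρ => by
    obtain ⟨X, haX, hX⟩ := ha.exists_mem_eval_eq_reflect ((Set.subset_insert _ _).trans hL) hρ
    exact ⟨fun Δ => .p1 '' X Δ, Set.mem_image_of_mem _ haX, congrArg Prod.fst hX⟩
  | _, _, _, .p2 ha, hL, ρ, hρ => by
    obtain ⟨X, haX, hX⟩ := ha.exists_mem_eval_eq_reflect ((Set.subset_insert _ _).trans hL) hρ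
    exact ⟨fun Δ => .p2 '' X Δ, Set.mem_image_of_mem _ haX, congrArg Prod.snd hX⟩

theorem Tmx.Normal.mem_reify_eval : ∀ {Γ : Ctxx ν} {A : Tyx ν} {t : Tmx Γ A},
    t.Normal → t.subterms ⊆ L → ∀ {ρ : Env (Set L) Γ}, ρ.IsReflected →
      t ∈ reify L A (t.eval ρ) Γ
  | _, _, t, .neutral ht, hL, ρ, hρ => by
    obtain ⟨X, htX, hX⟩ := ht.exists_mem_eval_eq_reflect hL hρ
    rw [hX]
    exact ⟨hL t.self_mem_subterms, _, _, htX, rfl⟩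
  | _, _, _, .lam hb, hL, _, hρ =>
    Set.mem_image_of_mem _ (hb.mem_reify_eval ((Set.subset_insert _ _).trans hL) (hρ.cons _))
  | _, _, _, .pair ha hb, hL, _, hρ => by
    obtain ⟨-, haL, hbL⟩ : _ ∧ _ ∧ _ := by simpa [subterms, Set.insert_subset_iff] using hL
    exact Set.mem_image2_of_mem (ha.mem_reify_eval haL hρ) (hb.mem_reify_eval hbL hρ)
  | _, _, _, .k, _, _, _ => rfl

end

end ReadBack

theorem exists_finite_eval_ne {a b : Tmx Γ A} (hne : ¬ Eqvx a b) :
    ∃ (S : Type) (_ : Finite S) (_ : Nonempty S) (ρ : Env S Γ), a.eval ρ ≠ b.eval ρ := by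
  obtain ⟨n, hn, han⟩ := a.hasNormal
  have : Finite n.subterms := n.finite_subterms
  refine ⟨Set n.subterms, inferInstance, inferInstance, canonicalEnv n.subterms Γ, fun hab => ?_⟩
  have hn_mem := hn.mem_reify_eval subset_rfl (isReflected_canonicalEnv n.subterms Γ)
  rw [← han.eval_eq, hab] at hn_mem
  exact hne (han.trans (Tmx.eqvx_of_mem_reify _ hn_mem).symm)

end FiniteModel

/-! ### Definition by cases -/

section Cases

variable {ν : Type} {A B C D : Tyx ν} {Γ Δ : Ctxx ν} {n : ℕ}

/-- The uncurrying `λz. u (p¹z) (p²z)` of `u`. -/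
def Tmx.uncurry (u : Tmx Γ (.arrow A (.arrow B D))) : Tmx Γ (.arrow (.prod A B) D) :=
  .lam (.app (.app u⇡ (.p1 (.var .vz))) (.p2 (.var .vz)))

/-- The term `λy. u (y t) y`, which continues as prescribed by `u` for the value of its argument
at `t`. -/
def Tmx.branchAt (t : Tmx Γ A) (u : Tmx Γ (.arrow B (.arrow (.arrow A B) D))) :
    Tmx Γ (.arrow (.arrow A B) D) :=
  .lam (.app (.app u⇡ (.app (.var .vz) t⇡)) (.var .vz))

theorem Eqvx.app_uncurry (u : Tmx Γ (.arrow A (.arrow B D))) (s : Tmx Γ (.prod A B)) :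
    Eqvx (.app u.uncurry s) (.app (.app u (.p1 s)) (.p2 s)) :=
  beta_of_eq <| by
    simp only [Tmx.subst1, Tmx.subst, Tmx.weaken_subst_cons, Tmx.subst_var, Substx.cons]

theorem Eqvx.app_branchAt (t : Tmx Γ A) (u : Tmx Γ (.arrow B (.arrow (.arrow A B) D)))
    (s : Tmx Γ (.arrow A B)) :
    Eqvx (.app (t.branchAt u) s) (.app (.app u (.app s t)) s) :=
  beta_of_eq <| by
    simp only [Tmx.subst1, Tmx.subst, Tmx.weaken_subst_cons, Tmx.subst_var, Substx.cons]

/-- The power `Cⁿ`, as the iterated product `C × (C × ⋯ × (C × T))`. -/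
def Tyx.pow (C : Tyx ν) : ℕ → Tyx ν
  | 0 => .unit
  | n + 1 => .prod C (C.pow n)

/-- The type `Cⁿ → C` of the projections that encode the elements of `Fin n`. -/
abbrev Tyx.num (C : Tyx ν) (n : ℕ) : Tyx ν := .arrow (C.pow n) C

namespace Tmx

/-- The tuple of type `Cⁿ` with the given components. -/
def tuple : ∀ {n : ℕ}, (Fin n → Tmx Γ C) → Tmx Γ (C.pow n)
  | 0, _ => .k
  | _ + 1, f => .pair (f 0) (tuple fun i => f i.succ)

/-- The projection `Cⁿ → C` to the component `i`, which encodes `i : Fin n`. -/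
def num : ∀ {n : ℕ}, Fin n → ∀ {Γ : Ctxx ν}, Tmx Γ (C.num n)
  | _ + 1, ⟨0, _⟩, _ => .lam (.p1 (.var .vz))
  | _ + 1, ⟨i + 1, hi⟩, _ => .lam (.app (num ⟨i, Nat.lt_of_succ_lt_succ hi⟩) (.p2 (.var .vz)))

theorem subst_tuple (f : Fin n → Tmx Γ C) (σ : Substx Γ Δ) :
    (tuple f).subst σ = tuple fun i => (f i).subst σ := by
  induction n with
  | zero => rfl
  | succ n ih => exact congrArg (Tmx.pair _) (ih _)

theorem rename_num (i : Fin n) (ρ : Renx Γ Δ) : (num i : Tmx Γ (C.num n)).rename ρ = num i := by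
  induction n generalizing Γ Δ with
  | zero => exact i.elim0
  | succ n ih =>
    obtain ⟨_ | i, hi⟩ := i
    · rfl
    · exact congrArg (fun t => lam (app t (p2 (var .vz)))) (ih _ _)

theorem subst_num (i : Fin n) (σ : Substx Γ Δ) : (num i : Tmx Γ (C.num n)).subst σ = num i := by
  induction n generalizing Γ Δ with
  | zero => exact i.elim0
  | succ n ih =>
    obtain ⟨_ | i, hi⟩ := i
    · rfl
    · exact congrArg (fun t => lam (app t (p2 (var .vz)))) (ih _ _)

end Tmx

theorem Eqvx.num_app_tuple (i : Fin n) (f : Fin n → Tmx Γ C) :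
    Eqvx (.app (.num i) (.tuple f)) (f i) := by
  induction n with
  | zero => exact i.elim0
  | succ n ih =>
    obtain ⟨_ | i, hi⟩ := i
    · exact (Eqvx.beta _ _).trans (.prodBeta1 _ _)
    · let i' : Fin n := ⟨i, Nat.lt_of_succ_lt_succ hi⟩
      have step : Eqvx (.app (.num i'.succ) (.tuple f)) (.app (.num i') (.p2 (.tuple f))) :=
        beta_of_eq (congrArg (fun t => Tmx.app t _) (Tmx.subst_num i' _))
      exact step.trans ((Eqvx.congApp (.refl _) (.prodBeta2 _ _)).trans (ih i' _))

/-- `EndsIn C D` says that `D` is generated from `C` and `T` by products and by `A → ·` for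
arbitrary types `A`. At these types, definition by cases on encodings in `Cⁿ → C` is possible. -/
inductive EndsIn (C : Tyx ν) : Tyx ν → Prop
  | base : EndsIn C C
  | unit : EndsIn C .unit
  | arrow (A : Tyx ν) {D : Tyx ν} : EndsIn C D → EndsIn C (.arrow A D)
  | prod {D E : Tyx ν} : EndsIn C D → EndsIn C E → EndsIn C (.prod D E)

theorem EndsIn.exists_num_cases (hD : EndsIn C D) (g : Fin n → Tmx Δ D) :
    ∃ h : Tmx Δ (.arrow (C.num n) D), ∀ i, Eqvx (.app h (.num i)) (g i) := by
  induction hD generalizing Δ with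
  | base =>
    refine ⟨.lam (.app (.var .vz) (.tuple fun i => (g i)⇡)), fun i => ?_⟩
    refine (Eqvx.beta_of_eq ?_).trans (Eqvx.num_app_tuple i g)
    simp only [Tmx.subst1, Tmx.subst, Tmx.subst_tuple, Tmx.weaken_subst_cons, Tmx.subst_var,
      Substx.cons]
  | unit => exact ⟨.lam .k, fun i => (Eqvx.unit _).trans (Eqvx.unit _).symm⟩
  | arrow A _ ih =>
    obtain ⟨h, hh⟩ := ih fun i => .app (g i)⇡ (.var .vz)
    refine ⟨.lam (.lam (.app (h.rename (Renx.ext (fun _ => .vs) A)) (.var (.vs .vz)))),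
      fun i => ?_⟩
    have unfold : Eqvx
        (.app (.lam (.lam (.app (h.rename (Renx.ext (fun _ => .vs) A)) (.var (.vs .vz)))))
          (.num i))
        (.lam (.app h (.num i))) := by
      apply Eqvx.beta_of_eq
      simp only [Tmx.subst1, Tmx.subst, Tmx.subst_rename, Substx.ext, Substx.cons, Tmx.rename_num]
      congr 2
      conv_rhs => rw [← h.subst_var]
      congr 1
      funext _ v
      cases v <;> rfl
    exact unfold.trans ((Eqvx.congLam (hh i)).trans (.eta _))
  | prod _ _ ih₁ ih₂ =>
    obtain ⟨h₁, hh₁⟩ := ih₁ fun i => .p1 (g i)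
    obtain ⟨h₂, hh₂⟩ := ih₂ fun i => .p2 (g i)
    refine ⟨.lam (.pair (.app h₁⇡ (.var .vz)) (.app h₂⇡ (.var .vz))), fun i => ?_⟩
    refine (Eqvx.beta_of_eq ?_).trans ((Eqvx.congPair (hh₁ i) (hh₂ i)).trans (.prodEta _))
    simp only [Tmx.subst1, Tmx.subst, Tmx.weaken_subst_cons, Tmx.subst_var, Substx.cons]

end Cases

/-! ### Representing a finite full type hierarchy by terms -/

section Representation

variable {ν : Type} {S : Type} {n : ℕ} (e : S ≃ Fin n) (C : Tyx ν) {Γ Δ : Ctxx ν} {A B : Tyx ν}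

/-- The type instance of `A` in which every atomic type becomes `Cⁿ → C`. -/
abbrev Tyx.inst (A C : Tyx ν) (n : ℕ) : Tyx ν := A.substA fun _ => C.num n

variable {C} in
theorem endsIn_inst : ∀ A : Tyx ν, EndsIn C (A.inst C n)
  | .atom _ => .arrow _ .base
  | .unit => .unit
  | .arrow _ B => .arrow _ (endsIn_inst B)
  | .prod A B => .prod (endsIn_inst A) (endsIn_inst B)

/-- The logical relation between terms of type instances and elements of the full type hierarchy
over `S`, where the elements of `S` are encoded as projections along an enumeration `e`. -/
def Represents : ∀ A : Tyx ν, Tmx Δ (A.inst C n) → A.Sem S → Prop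
  | .atom _, t, x => Eqvx t (.num (e x))
  | .unit, _, _ => True
  | .arrow A B, t, f => ∀ (s : Tmx Δ (A.inst C n)) (x : A.Sem S),
      Represents A s x → Represents B (.app t s) (f x)
  | .prod A B, t, x => Represents A (.p1 t) x.1 ∧ Represents B (.p2 t) x.2

/-- `h` computes `g` on representing terms. -/
def Computes {D : Tyx ν} (h : Tmx Δ (.arrow (A.inst C n) D)) (g : A.Sem S → Tmx Δ D) : Prop :=
  ∀ (s : Tmx Δ (A.inst C n)) (x : A.Sem S), Represents e C A s x → Eqvx (.app h s) (g x)

/-- Every element of the domain of `A` is represented by a term in context `Δ`. -/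
def Representable (Δ : Ctxx ν) (A : Tyx ν) : Prop :=
  ∀ x : A.Sem S, ∃ t : Tmx Δ (A.inst C n), Represents e C A t x

/-- Definition by cases on the elements of the domain of `A` is possible in context `Δ`. -/
def Switchable (Δ : Ctxx ν) (A : Tyx ν) : Prop :=
  ∀ ⦃D : Tyx ν⦄, EndsIn C D → ∀ g : A.Sem S → Tmx Δ D, ∃ h, Computes e C h g

variable {e C}

theorem Represents.congr : ∀ {A : Tyx ν} {t u : Tmx Δ (A.inst C n)} {x : A.Sem S},
    Eqvx t u → Represents e C A t x → Represents e C A u x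
  | .atom _, _, _, _, htu, ht => htu.symm.trans ht
  | .unit, _, _, _, _, _ => trivial
  | .arrow _ _, _, _, _, htu, ht => fun s x hs => congr (.congApp htu (.refl _)) (ht s x hs)
  | .prod _ _, _, _, _, htu, ht => ⟨congr (.congP1 htu) ht.1, congr (.congP2 htu) ht.2⟩

theorem switchable_atom (p : ν) : Switchable e C Δ (.atom p) := by
  intro D hD g
  obtain ⟨h, hh⟩ := hD.exists_num_cases fun i => g (e.symm i)
  refine ⟨h, fun s x hs => (Eqvx.congApp (.refl h) hs).trans ?_⟩
  simpa only [Equiv.symm_apply_apply] using hh (e x)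

theorem computes_const {D : Tyx ν} (t : Tmx Δ D) :
    Computes e C (A := A) (.lam t⇡) fun _ => t :=
  fun s _ _ => .beta_of_eq (t.weaken_subst1 s)

theorem representable_prod (hA : Representable e C Δ A) (hB : Representable e C Δ B) :
    Representable e C Δ (.prod A B) := by
  rintro ⟨x, y⟩
  obtain ⟨t, ht⟩ := hA x
  obtain ⟨u, hu⟩ := hB y
  exact ⟨.pair t u, ht.congr (Eqvx.prodBeta1 t u).symm, hu.congr (Eqvx.prodBeta2 t u).symm⟩

theorem switchable_prod (hA : Switchable e C Δ A) (hB : Switchable e C Δ B) :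
    Switchable e C Δ (.prod A B) := by
  intro D hD g
  choose h hh using fun x => hB hD fun y => g (x, y)
  obtain ⟨u, hu⟩ := hA (.arrow (B.inst C n) hD) h
  exact ⟨u.uncurry, fun s x hs => (Eqvx.app_uncurry u s).trans
    ((Eqvx.congApp (hu _ _ hs.1) (.refl _)).trans (hh x.1 _ _ hs.2))⟩

theorem representable_arrow (hA : Switchable e C Δ A) (hB : Representable e C Δ B) :
    Representable e C Δ (.arrow A B) := by
  intro f
  choose t ht using hB
  obtain ⟨h, hh⟩ := hA (endsIn_inst B) fun x => t (f x)
  exact ⟨h, fun s x hs => (ht (f x)).congr (hh s x hs).symm⟩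

open Classical in
theorem exists_computes_of_dependsOn [Nonempty S] (hA : Representable e C Δ A)
    (hB : Switchable e C Δ B) {D : Tyx ν} (hD : EndsIn C D) (I : Finset (A.Sem S)) :
    ∀ g : (Tyx.arrow A B).Sem S → Tmx Δ D, DependsOn g I → ∃ h, Computes e C h g := by
  induction I using Finset.induction_on with
  | empty =>
    intro g hg
    let f₀ : (Tyx.arrow A B).Sem S := Classical.arbitrary _
    have g_const : g = fun _ => g f₀ := funext fun f => hg (by simp)
    rw [g_const]
    exact ⟨_, computes_const (g f₀)⟩
  | insert x I hxI ih =>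
    intro g hg
    have hg_update (y : B.Sem S) : DependsOn (fun f => g (Function.update f x y)) I := by
      simpa only [Finset.erase_insert hxI] using hg.update x y
    choose h hh using fun y => ih _ (hg_update y)
    obtain ⟨u, hu⟩ := hB (.arrow (Tyx.inst (.arrow A B) C n) hD) h
    obtain ⟨t, ht⟩ := hA x
    refine ⟨t.branchAt u, fun s f hs => ?_⟩
    have branch := (Eqvx.app_branchAt t u s).trans (.congApp (hu _ _ (hs t x ht)) (.refl s))
    have case_x : Eqvx (.app (h (f x)) s) (g (Function.update f x (f x))) := hh (f x) s f hs
    rw [Function.update_eq_self] at case_x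
    exact branch.trans case_x

theorem switchable_arrow [Nonempty S] (hA : Representable e C Δ A)
    (hB : Switchable e C Δ B) : Switchable e C Δ (.arrow A B) := by
  intro D hD g
  have : Finite S := .of_equiv _ e.symm
  have := Fintype.ofFinite (A.Sem S)
  exact exists_computes_of_dependsOn hA hB hD Finset.univ g
    (by simpa only [Finset.coe_univ] using dependsOn_univ g)

variable (e C Δ) in
theorem representable_and_switchable [Nonempty S] (A : Tyx ν) :
    Representable e C Δ A ∧ Switchable e C Δ A := by
  induction A with
  | atom p => exact ⟨fun x => ⟨.num (e x), .refl _⟩, switchable_atom p⟩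
  | unit => exact ⟨fun _ => ⟨.k, trivial⟩, fun _ _ g => ⟨_, computes_const (g ())⟩⟩
  | arrow A B ihA ihB =>
    exact ⟨representable_arrow ihA.2 ihB.1, switchable_arrow ihA.1 ihB.2⟩
  | prod A B ihA ihB => exact ⟨representable_prod ihA.1 ihB.1, switchable_prod ihA.2 ihB.2⟩

/-- Every variable is substituted by a term representing its value under the valuation. -/
def RepresentsEnv (e : S ≃ Fin n) (C : Tyx ν)
    (σ : Substx (Γ.map (Tyx.substA fun _ => C.num n)) Δ) (ρ : Env S Γ) : Prop :=
  ∀ (B : Tyx ν) (v : Varx Γ B), Represents e C B (σ _ (v.substA _)) (ρ B v)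

theorem RepresentsEnv.cons {σ : Substx (Γ.map (Tyx.substA fun _ => C.num n)) Δ} {ρ : Env S Γ}
    {s : Tmx Δ (A.inst C n)} {x : A.Sem S} (hs : Represents e C A s x)
    (hσ : RepresentsEnv e C σ ρ) :
    RepresentsEnv (Γ := A :: Γ) e C (Substx.cons s σ) (Env.cons x ρ)
  | _, .vz => hs
  | _, .vs v => hσ _ v

theorem RepresentsEnv.represents_eval {σ : Substx (Γ.map (Tyx.substA fun _ => C.num n)) Δ}
    {ρ : Env S Γ} (hσ : RepresentsEnv e C σ ρ) (t : Tmx Γ A) :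
    Represents e C A ((t.substA _).subst σ) (t.eval ρ) := by
  induction t with
  | var v => exact hσ _ v
  | app _ _ ihf iha => exact ihf hσ _ _ (iha hσ)
  | lam b ih => exact fun s x hs => (ih (hσ.cons hs)).congr (Eqvx.app_subst_lam _ σ s).symm
  | pair a b iha ihb =>
    exact ⟨(iha hσ).congr (Eqvx.prodBeta1 _ _).symm, (ihb hσ).congr (Eqvx.prodBeta2 _ _).symm⟩
  | p1 a ih => exact (ih hσ).1
  | p2 a ih => exact (ih hσ).2
  | k => trivial

variable (e C Δ) in
theorem exists_representsEnv [Nonempty S] : ∀ {Γ : Ctxx ν} (ρ : Env S Γ),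
    ∃ σ : Substx (Γ.map (Tyx.substA fun _ => C.num n)) Δ, RepresentsEnv e C σ ρ
  | [], _ => ⟨fun _ v => v.elim0, fun _ v => v.elim0⟩
  | A :: Γ, ρ => by
    obtain ⟨σ, hσ⟩ := exists_representsEnv fun B v => ρ B (.vs v)
    obtain ⟨s, hs⟩ := (representable_and_switchable e C Δ A).1 (ρ A .vz)
    refine ⟨Substx.cons s σ, fun B v => ?_⟩
    cases v with
    | vz => exact hs
    | vs w => exact hσ B w

end Representation

theorem exists_separating_instance {ν : Type} {Γ : Ctxx ν} {A : Tyx ν} {a b : Tmx Γ A}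
    (hne : ¬ Eqvx a b) {Δ : Ctxx ν} {C : Tyx ν} (c d : Tmx Δ C) :
    ∃ (τ : ν → Tyx ν) (σ : Substx (Γ.map (Tyx.substA τ)) Δ)
      (h : Tmx Δ (.arrow (A.substA τ) C)),
      Eqvx (.app h ((a.substA τ).subst σ)) c ∧ Eqvx (.app h ((b.substA τ).subst σ)) d := by
  classical
  obtain ⟨S, _, _, ρ, hρ⟩ := exists_finite_eval_ne hne
  obtain ⟨n, ⟨e⟩⟩ := Finite.exists_equiv_fin S
  obtain ⟨σ, hσ⟩ := exists_representsEnv e C Δ ρ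
  obtain ⟨h, hh⟩ := (representable_and_switchable e C Δ A).2 .base
    fun x => if x = a.eval ρ then c else d
  refine ⟨_, σ, h, ?_, ?_⟩
  · simpa only [if_pos] using hh _ _ (hσ.represents_eval a)
  · simpa only [if_neg hρ.symm] using hh _ _ (hσ.represents_eval b)

/--
**Maximality Corollary for Λ×.** If `a = b` is not provable in Λ×, then in Λ× extended
with `a = b` as a new axiom schema one can prove every formula `c = d`.
-/
theorem maximality_lambda_products {ν : Type} {Γ : Ctxx ν} {A : Tyx ν}
    (a b : Tmx Γ A) (hne : ¬ Eqvx a b) {Δ : Ctxx ν} {C : Tyx ν} (c d : Tmx Δ C) :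
    EqvxExt a b c d := by
  obtain ⟨τ, σ, h, hc, hd⟩ := exists_separating_instance hne c d
  have h_ax : EqvxExt a b (.app h ((a.substA τ).subst σ)) (.app h ((b.substA τ).subst σ)) :=
    .congApp (.refl h) (.ax τ σ)
  exact (hc.toExt a b).symm.trans (h_ax.trans (hd.toExt a b))
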